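/- (Uniqueness of the stationary solution.) Let j > 0 and K ≥ 1 an integer. Suppose ρ̂ : [−1,1] → [0,1] is continuous and the time-independent function ρ(r,t) := ρ̂(r) solves the macroscopic integral equation with initial datum ρ̂. Then ρ̂(r) = j·(1−α^K)·r + 1/2 for all r ∈ [−1,1], where α ∈ (1/2,1) is the unique solution of α + j·α^K = j + 1/2. -/

import Mathlib

open MeasureTheory

/-- The Gaussian heat kernel on the real line. -/
noncomputable def G (t r r' : ℝ) : ℝ :=
  Real.exp (-(r - r') ^ 2 / (2 * t)) / Real.sqrt (2 * Real.pi * t)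

/-- The Neumann heat kernel on `[-1,1]`, obtained from the Gaussian kernel by
the reflection map: for `r' ∈ (-1,1)`,
`P t r r' = ∑_{n∈ℤ} [G t r (r'+4n) + G t r (2−r'+4n)]`, while at the boundary
`P t r (±1) = ∑_{n∈ℤ} 2·G t r (±1+4n)`. -/
noncomputable def P (t r r' : ℝ) : ℝ :=
  if r' = 1 ∨ r' = -1 then ∑' n : ℤ, 2 * G t r (r' + 4 * n)
  else ∑' n : ℤ, (G t r (r' + 4 * n) + G t r (2 - r' + 4 * n))


/-- `ρ : [−1,1] × [0,∞) → [0,1]` (encoded as `ρ : ℝ → ℝ → ℝ`, first argument the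
space variable) is a bounded measurable solution of the macroscopic integral
equation with initial datum `ρ₀ : [−1,1] → [0,1]`: it takes values in `[0,1]`,
agrees with `ρ₀` at time `0`, and for all `t > 0`, `r ∈ [−1,1]`,
`ρ(r,t) = ∫_{−1}^{1} P_t(r,r')ρ₀(r')dr'
  + (j/2)∫_0^t [P_s(r,1)(1 − ρ(1,t−s)^K) − P_s(r,−1)(1 − (1 − ρ(−1,t−s))^K)] ds`. -/
def IsMacroSolution (j : ℝ) (K : ℕ) (ρ₀ : ℝ → ℝ) (ρ : ℝ → ℝ → ℝ) : Prop :=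
  Measurable (Function.uncurry ρ) ∧
  (∀ r ∈ Set.Icc (-1 : ℝ) 1, ∀ t : ℝ, 0 ≤ t → ρ r t ∈ Set.Icc (0 : ℝ) 1) ∧
  (∀ r ∈ Set.Icc (-1 : ℝ) 1, ρ r 0 = ρ₀ r) ∧
  (∀ t : ℝ, 0 < t → ∀ r ∈ Set.Icc (-1 : ℝ) 1,
    ρ r t = (∫ r' in (-1 : ℝ)..1, P t r r' * ρ₀ r')
      + j / 2 * ∫ s in (0 : ℝ)..t,
          (P s r 1 * (1 - (ρ 1 (t - s)) ^ K)
            - P s r (-1) * (1 - (1 - ρ (-1) (t - s)) ^ K)))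

/-!
Test the equation against the Neumann cosines `cos (n π (r + 1) / 2)`. They are invariant under the
reflections defining `P`, so unfolding the Gaussian kernel shows that `P_t` multiplies the `n`-th
one by `exp (-λ t)` with `λ = (n π / 2)² / 2`. At time `T` this equates `(1 - exp (-λ T)) ⟨cosₙ, ρ⟩`
with `∫₀ᵀ exp (-λ s) ds` times the boundary terms. Since
`1 - exp (-λ T) = λ ∫₀ᵀ exp (-λ s) ds`, the time drops out and leaves the weak form of `½ ρ'' = 0`
with `ρ'(1) = j (1 - ρ(1)^K)` and `ρ'(-1) = j (1 - (1 - ρ(-1))^K)`. The mode `n = 0` says that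
these slopes agree, hence `ρ(1) = 1 - ρ(-1)`. The cosines are the Chebyshev polynomials in the
injective function `cos (π (r + 1) / 2)`, hence complete by Stone–Weierstrass, so the remaining
modes make `ρ` affine. Evaluating at `±1`, its constant term is `1 / 2` and `x = ρ(1)` solves
`x + j x ^ K = j + 1 / 2`, whose left-hand side is strictly increasing.
-/

open Set ProbabilityTheory
open scoped NNReal

lemma G_nonneg (t r y : ℝ) : 0 ≤ G t r y := by unfold G; positivity

lemma measurable_G : Measurable fun p : ℝ × ℝ × ℝ => G p.1 p.2.1 p.2.2 := by
  unfold G; fun_prop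

lemma G_eq_gaussianPDFReal {t : ℝ} (ht : 0 ≤ t) (r y : ℝ) :
    G t r y = gaussianPDFReal y t.toNNReal r := by
  rw [G, gaussianPDFReal, Real.coe_toNNReal t ht, div_eq_inv_mul]

lemma integrable_G {t : ℝ} (ht : 0 ≤ t) (y : ℝ) : Integrable fun r => G t r y := by
  simpa only [G_eq_gaussianPDFReal ht] using integrable_gaussianPDFReal y t.toNNReal

lemma summable_G {t : ℝ} (ht : 0 < t) (r y : ℝ) : Summable fun n : ℤ => G t r (y + 4 * n) := by
  have h := HurwitzKernelBounds.summable_f_int 0 ((y - r) / 4) (t := 8 / (Real.pi * t))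
    (by positivity)
  refine (h.div_const (Real.sqrt (2 * Real.pi * t))).congr fun n => ?_
  rw [G, HurwitzKernelBounds.f_int, pow_zero, one_mul]
  congr 2
  field_simp
  ring

lemma tsum_G_add_four (t r y : ℝ) :
    ∑' n : ℤ, G t r (y + 4 + 4 * n) = ∑' n : ℤ, G t r (y + 4 * n) := by
  rw [← (Equiv.addRight (1 : ℤ)).tsum_eq fun n : ℤ => G t r (y + 4 * n)]
  refine tsum_congr fun n => congrArg (G t r) ?_
  rw [Equiv.coe_addRight]
  push_cast
  ring

lemma P_eq_tsum_add_tsum {t : ℝ} (ht : 0 < t) (r y : ℝ) :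
    P t r y = ∑' n : ℤ, G t r (y + 4 * n) + ∑' n : ℤ, G t r (2 - y + 4 * n) := by
  unfold P
  split_ifs with hy
  · rw [tsum_mul_left, two_mul]
    rcases hy with rfl | rfl
    · norm_num
    · rw [← tsum_G_add_four t r (-1)]
      norm_num
  · exact (summable_G ht r y).tsum_add (summable_G ht r (2 - y))

/-- Unlike the definition of `P`, this form reflects the first variable, so that integrals over
`[-1, 1]` in that variable unfold to the whole line. -/
lemma P_eq_tsum {t : ℝ} (ht : 0 < t) (r y : ℝ) :
    P t r y = ∑' n : ℤ, (G t (r + 4 * n) y + G t (2 + 4 * n - r) y) := by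
  have translate (n : ℤ) : G t r (y + 4 * (-n : ℤ)) = G t (r + 4 * n) y := by
    unfold G; push_cast; ring_nf
  have reflect (n : ℤ) : G t r (2 - y + 4 * n) = G t (2 + 4 * n - r) y := by
    unfold G; ring_nf
  have h₁ := ((Equiv.neg ℤ).summable_iff.mpr (summable_G ht r y)).congr translate
  have h₂ := (summable_G ht r (2 - y)).congr reflect
  rw [h₁.tsum_add h₂, P_eq_tsum_add_tsum ht, ← (Equiv.neg ℤ).tsum_eq]
  exact congrArg₂ _ (tsum_congr translate) (tsum_congr reflect)

lemma P_nonneg (t r y : ℝ) : 0 ≤ P t r y := by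
  unfold P
  split_ifs
  · exact tsum_nonneg fun n => mul_nonneg zero_le_two (G_nonneg ..)
  · exact tsum_nonneg fun n => add_nonneg (G_nonneg ..) (G_nonneg ..)

lemma measurable_P : Measurable fun p : ℝ × ℝ × ℝ => P p.1 p.2.1 p.2.2 := by
  have hG {f : ℝ → ℝ} (hf : Measurable f) :
      Measurable fun p : ℝ × ℝ × ℝ => G p.1 p.2.1 (f p.2.2) :=
    measurable_G.comp (f := fun p : ℝ × ℝ × ℝ => (p.1, p.2.1, f p.2.2)) (by fun_prop)
  have hset : MeasurableSet {p : ℝ × ℝ × ℝ | p.2.2 = 1 ∨ p.2.2 = -1} :=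
    measurable_snd.snd ((measurableSet_singleton 1).union (measurableSet_singleton (-1)))
  unfold P
  refine Measurable.ite hset (Measurable.tsum fun n => ?_) (Measurable.tsum fun n => ?_)
  · exact (hG (f := fun y => y + 4 * n) (by fun_prop)).const_mul 2
  · exact (hG (f := fun y => y + 4 * n) (by fun_prop)).add
      (hG (f := fun y => 2 - y + 4 * n) (by fun_prop))

lemma integral_cos_gaussianReal (μ : ℝ) (v : ℝ≥0) (k c : ℝ) :
    ∫ x, Real.cos (k * x + c) ∂gaussianReal μ v =
      Real.exp (-(v * k ^ 2 / 2)) * Real.cos (k * μ + c) := by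
  have hint : Integrable (fun x : ℝ => Complex.exp (k * x * Complex.I)) (gaussianReal μ v) := by
    refine .of_bound (by fun_prop) 1 (.of_forall fun x => ?_)
    exact_mod_cast (Complex.norm_exp_ofReal_mul_I (k * x)).le
  have hchar : Complex.exp (c * Complex.I) * charFun (gaussianReal μ v) k =
      (Real.exp (-(v * k ^ 2 / 2)) : ℂ) * Complex.exp ((k * μ + c : ℝ) * Complex.I) := by
    rw [charFun_gaussianReal, ← Complex.exp_add, Complex.ofReal_exp, ← Complex.exp_add]
    push_cast
    ring_nf
  calc ∫ x, Real.cos (k * x + c) ∂gaussianReal μ v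
    _ = ∫ x, (Complex.exp (c * Complex.I) * Complex.exp (k * x * Complex.I)).re
          ∂gaussianReal μ v := by
        refine integral_congr_ae (.of_forall fun x => ?_)
        dsimp only
        rw [← Complex.exp_add, ← Complex.exp_ofReal_mul_I_re]
        push_cast
        ring_nf
    _ = (Complex.exp (c * Complex.I) * charFun (gaussianReal μ v) k).re := by
        rw [charFun_apply_real, ← integral_const_mul]
        exact integral_re (hint.const_mul _)
    _ = Real.exp (-(v * k ^ 2 / 2)) * Real.cos (k * μ + c) := by
        rw [hchar, Complex.re_ofReal_mul, Complex.exp_ofReal_mul_I_re]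

/-- The frequency of the `n`-th Neumann eigenfunction of `[-1, 1]`. The generator of the kernel `P`
is `½ d²/dr²`, so the corresponding decay rate is `neumannFreq n ^ 2 / 2`. -/
noncomputable def neumannFreq (n : ℕ) : ℝ := n * Real.pi / 2

/-- The `n`-th Neumann eigenfunction of `[-1, 1]`, used to test the integral equation. It is defined
on the whole line and invariant under the reflections in both endpoints. -/
noncomputable def neumannMode (n : ℕ) (r : ℝ) : ℝ := Real.cos (neumannFreq n * (r + 1))

lemma neumannFreq_ne_zero {n : ℕ} (hn : n ≠ 0) : neumannFreq n ≠ 0 := by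
  unfold neumannFreq; positivity

lemma neumannMode_zero (r : ℝ) : neumannMode 0 r = 1 := by simp [neumannMode, neumannFreq]

lemma abs_neumannMode_le_one (n : ℕ) (r : ℝ) : |neumannMode n r| ≤ 1 := Real.abs_cos_le_one _

@[fun_prop]
lemma continuous_neumannMode (n : ℕ) : Continuous (neumannMode n) := by
  unfold neumannMode; fun_prop

lemma neumannMode_add_four_mul (n : ℕ) (r : ℝ) (m : ℤ) :
    neumannMode n (r + 4 * m) = neumannMode n r := by
  unfold neumannMode neumannFreq
  rw [← Real.cos_add_int_mul_two_pi (n * Real.pi / 2 * (r + 1)) (n * m)]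
  congr 1
  push_cast
  ring

lemma neumannMode_two_add_four_mul_sub (n : ℕ) (r : ℝ) (m : ℤ) :
    neumannMode n (2 + 4 * m - r) = neumannMode n r := by
  unfold neumannMode neumannFreq
  rw [← Real.cos_neg (n * Real.pi / 2 * (r + 1)),
    ← Real.cos_add_int_mul_two_pi (-(n * Real.pi / 2 * (r + 1))) (n * (m + 1))]
  congr 1
  push_cast
  ring

lemma integrable_neumannMode_mul {μ : Measure ℝ} {f : ℝ → ℝ} (hf : Integrable f μ) (n : ℕ) :
    Integrable (fun r => neumannMode n r * f r) μ :=
  hf.bdd_mul (continuous_neumannMode n).aestronglyMeasurable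
    (.of_forall (abs_neumannMode_le_one n))

lemma integral_neumannMode_mul_G {t : ℝ} (ht : 0 < t) (n : ℕ) (y : ℝ) :
    ∫ r, neumannMode n r * G t r y = Real.exp (-(neumannFreq n ^ 2 / 2 * t)) * neumannMode n y := by
  have h := integral_cos_gaussianReal y t.toNNReal (neumannFreq n) (neumannFreq n)
  rw [integral_gaussianReal_eq_integral_smul (by simpa using ht), Real.coe_toNNReal t ht.le] at h
  simp only [neumannMode, G_eq_gaussianPDFReal ht.le, mul_add_one]
  simp_rw [mul_comm (Real.cos _), ← smul_eq_mul (gaussianPDFReal _ _ _)]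
  rw [h]
  ring_nf

lemma hasSum_integral_fold {h : ℝ → ℝ} (hh : Integrable h) :
    HasSum (fun n : ℤ => ∫ r in Ioc (-1 : ℝ) 1, (h (r + 4 * n) + h (2 + 4 * n - r)))
      (∫ r, h r) := by
  have hblock (n : ℤ) : ∫ r in Ioc (-1 : ℝ) 1, (h (r + 4 * n) + h (2 + 4 * n - r)) =
      ∫ r in (4 * n - 1 : ℝ)..4 * n + 3, h r := by
    rw [← intervalIntegral.integral_of_le (by norm_num), intervalIntegral.integral_add
      (hh.comp_add_right _).intervalIntegrable (hh.comp_sub_left _).intervalIntegrable,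
      intervalIntegral.integral_comp_add_right, intervalIntegral.integral_comp_sub_left]
    convert intervalIntegral.integral_add_adjacent_intervals (b := (4 * n + 1 : ℝ))
      hh.intervalIntegrable hh.intervalIntegrable using 3 <;> ring
  have hrescale (n : ℤ) : ∫ r in (4 * n - 1 : ℝ)..4 * n + 3, h r =
      4 * ∫ x in (-1 / 4 + n : ℝ)..-1 / 4 + n + 1, h (4 * x) := by
    rw [intervalIntegral.mul_integral_comp_mul_left]
    ring_nf
  have hsum := ((hh.comp_mul_left' four_ne_zero).hasSum_intervalIntegral (-1 / 4)).mul_left 4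
  rw [Measure.integral_comp_mul_left, abs_of_pos (by norm_num), smul_eq_mul,
    mul_inv_cancel_left₀ four_ne_zero] at hsum
  simpa only [hblock, hrescale] using hsum

lemma integral_tsum_fold {h : ℝ → ℝ} (hh : Integrable h) :
    ∫ r in Ioc (-1 : ℝ) 1, ∑' n : ℤ, (h (r + 4 * n) + h (2 + 4 * n - r)) = ∫ r, h r := by
  have hint {f : ℝ → ℝ} (hf : Integrable f) (n : ℤ) :
      Integrable fun r => f (r + 4 * n) + f (2 + 4 * n - r) :=
    (hf.comp_add_right _).add (hf.comp_sub_left _)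
  refine (hasSum_integral_of_summable_integral_norm (fun n => (hint hh n).integrableOn)
    ?_).unique (hasSum_integral_fold hh)
  exact (hasSum_integral_fold hh.norm).summable.of_nonneg_of_le
    (fun n => integral_nonneg fun r => norm_nonneg _)
    fun n => integral_mono (hint hh n).integrableOn.norm (hint hh.norm n).integrableOn
      fun r => norm_add_le _ _

lemma integral_neumannMode_mul_P {t : ℝ} (ht : 0 < t) (n : ℕ) (y : ℝ) :
    ∫ r in Ioc (-1 : ℝ) 1, neumannMode n r * P t r y =
      Real.exp (-(neumannFreq n ^ 2 / 2 * t)) * neumannMode n y := by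
  rw [← integral_neumannMode_mul_G ht,
    ← integral_tsum_fold (integrable_neumannMode_mul (integrable_G ht.le y) n)]
  simp_rw [P_eq_tsum ht, neumannMode_add_four_mul, neumannMode_two_add_four_mul_sub, ← mul_add,
    tsum_mul_left]

lemma integral_P {t : ℝ} (ht : 0 < t) (y : ℝ) : ∫ r in Ioc (-1 : ℝ) 1, P t r y = 1 := by
  simpa [neumannMode_zero, neumannFreq] using integral_neumannMode_mul_P ht 0 y

lemma integrableOn_P {t : ℝ} (ht : 0 < t) (y : ℝ) :
    IntegrableOn (fun r => P t r y) (Ioc (-1 : ℝ) 1) :=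
  .of_integral_ne_zero <| by simp [integral_P ht]

section Fubini

variable {Ω : Type*} [MeasurableSpace Ω] {ν : Measure Ω} [SFinite ν] {τ η g : Ω → ℝ}

lemma integrable_P_mul (hτ : Measurable τ) (hη : Measurable η) (hpos : ∀ᵐ ω ∂ν, 0 < τ ω)
    (hg : Integrable g ν) :
    Integrable (fun p : ℝ × Ω => P (τ p.2) p.1 (η p.2) * g p.2)
      ((volume.restrict (Ioc (-1 : ℝ) 1)).prod ν) := by
  have hP : Measurable fun p : ℝ × Ω => P (τ p.2) p.1 (η p.2) :=
    measurable_P.comp (f := fun p : ℝ × Ω => (τ p.2, p.1, η p.2)) (by fun_prop)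
  have hPg : AEStronglyMeasurable (fun p : ℝ × Ω => P (τ p.2) p.1 (η p.2) * g p.2)
      ((volume.restrict (Ioc (-1 : ℝ) 1)).prod ν) :=
    hP.aestronglyMeasurable.mul hg.aestronglyMeasurable.comp_snd
  refine (integrable_prod_iff' hPg).mpr ⟨?_, hg.norm.congr ?_⟩
  · filter_upwards [hpos] with ω hω using (integrableOn_P hω _).mul_const _
  · filter_upwards [hpos] with ω hω
    simp only [norm_mul, Real.norm_of_nonneg (P_nonneg ..)]
    rw [integral_mul_const, integral_P hω, one_mul]

lemma integral_neumannMode_mul_integral_P (hτ : Measurable τ) (hη : Measurable η)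
    (hpos : ∀ᵐ ω ∂ν, 0 < τ ω) (hg : Integrable g ν) (n : ℕ) :
    ∫ r in Ioc (-1 : ℝ) 1, neumannMode n r * ∫ ω, P (τ ω) r (η ω) * g ω ∂ν =
      ∫ ω, Real.exp (-(neumannFreq n ^ 2 / 2 * τ ω)) * neumannMode n (η ω) * g ω ∂ν := by
  have hint : Integrable (fun p : ℝ × Ω => neumannMode n p.1 * (P (τ p.2) p.1 (η p.2) * g p.2))
      ((volume.restrict (Ioc (-1 : ℝ) 1)).prod ν) :=
    (integrable_P_mul hτ hη hpos hg).bdd_mul (by fun_prop)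
      (.of_forall fun p => abs_neumannMode_le_one n p.1)
  simp_rw [← integral_const_mul]
  rw [integral_integral_swap hint]
  refine integral_congr_ae ?_
  filter_upwards [hpos] with ω hω
  simp_rw [← mul_assoc]
  rw [integral_mul_const, integral_neumannMode_mul_P hω]

end Fubini

lemma integrable_P_mul_const (T e a : ℝ) :
    Integrable (fun p : ℝ × ℝ => P p.2 p.1 e * a)
      ((volume.restrict (Ioc (-1 : ℝ) 1)).prod (volume.restrict (Ioc 0 T))) :=
  integrable_P_mul measurable_id measurable_const
    ((ae_restrict_mem measurableSet_Ioc).mono fun _ hs => hs.1) (integrable_const a)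

lemma integral_neumannMode_mul_integral_P_mul_const (T e a : ℝ) (n : ℕ) :
    ∫ r in Ioc (-1 : ℝ) 1, neumannMode n r * ∫ s in Ioc 0 T, P s r e * a =
      (∫ s in Ioc 0 T, Real.exp (-(neumannFreq n ^ 2 / 2 * s))) * (neumannMode n e * a) := by
  rw [← integral_mul_const]
  simp_rw [← mul_assoc]
  exact integral_neumannMode_mul_integral_P measurable_id measurable_const
    ((ae_restrict_mem measurableSet_Ioc).mono fun _ hs => hs.1) (integrable_const a) n

lemma ae_integral_flux_eq {T : ℝ} (hT : 0 ≤ T) (A B : ℝ) :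
    (fun r => ∫ s in (0 : ℝ)..T, (P s r 1 * A - P s r (-1) * B))
      =ᵐ[volume.restrict (Ioc (-1 : ℝ) 1)]
    fun r => (∫ s in Ioc 0 T, P s r 1 * A) - ∫ s in Ioc 0 T, P s r (-1) * B := by
  filter_upwards [(integrable_P_mul_const T 1 A).prod_right_ae,
    (integrable_P_mul_const T (-1) B).prod_right_ae] with r hA hB
  rw [intervalIntegral.integral_of_le hT]
  exact integral_sub hA hB

lemma integrableOn_integral_flux {T : ℝ} (hT : 0 ≤ T) (A B : ℝ) :
    IntegrableOn (fun r => ∫ s in (0 : ℝ)..T, (P s r 1 * A - P s r (-1) * B))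
      (Ioc (-1 : ℝ) 1) :=
  ((integrable_P_mul_const T 1 A).integral_prod_left.sub
    (integrable_P_mul_const T (-1) B).integral_prod_left).congr (ae_integral_flux_eq hT A B).symm

lemma integral_neumannMode_mul_flux {T : ℝ} (hT : 0 ≤ T) (A B : ℝ) (n : ℕ) :
    ∫ r in Ioc (-1 : ℝ) 1, neumannMode n r * ∫ s in (0 : ℝ)..T, (P s r 1 * A - P s r (-1) * B) =
      (∫ s in (0 : ℝ)..T, Real.exp (-(neumannFreq n ^ 2 / 2 * s))) *
        (neumannMode n 1 * A - neumannMode n (-1) * B) := by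
  have hint (e a : ℝ) := integrable_neumannMode_mul
    (integrable_P_mul_const T e a).integral_prod_left n
  calc ∫ r in Ioc (-1 : ℝ) 1, neumannMode n r * ∫ s in (0 : ℝ)..T, (P s r 1 * A - P s r (-1) * B)
    _ = ∫ r in Ioc (-1 : ℝ) 1, (neumannMode n r * (∫ s in Ioc 0 T, P s r 1 * A) -
          neumannMode n r * ∫ s in Ioc 0 T, P s r (-1) * B) := by
        refine integral_congr_ae ?_
        filter_upwards [ae_integral_flux_eq hT A B] with r hr
        rw [hr, mul_sub]
    _ = _ := by
        rw [integral_sub (hint 1 A) (hint (-1) B), integral_neumannMode_mul_integral_P_mul_const,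
          integral_neumannMode_mul_integral_P_mul_const, ← mul_sub,
          intervalIntegral.integral_of_le hT]

lemma mul_integral_exp_neg_mul (l T : ℝ) :
    l * ∫ s in (0 : ℝ)..T, Real.exp (-(l * s)) = 1 - Real.exp (-(l * T)) := by
  have hderiv (s : ℝ) :
      HasDerivAt (fun s => -Real.exp (-(l * s))) (l * Real.exp (-(l * s))) s :=
    ((hasDerivAt_id' s).const_mul l).neg.exp.neg.congr_deriv (by simp [mul_comm])
  rw [← intervalIntegral.integral_const_mul, intervalIntegral.integral_eq_sub_of_hasDerivAt
    (fun s _ => hderiv s) (Continuous.intervalIntegrable (by fun_prop) _ _)]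
  simp only [mul_zero, neg_zero, Real.exp_zero]
  ring

/-- The time-independent function `ρ` satisfies the integral equation at the single time `T`, with
the boundary terms `1 - ρ(1)^K` and `1 - (1 - ρ(-1))^K` replaced by constants `A` and `B`, so
that pairing the equation with a Neumann mode is linear in `ρ`, `A` and `B`. -/
def IsStationaryAt (j A B T : ℝ) (ρ : ℝ → ℝ) : Prop :=
  ∀ r ∈ Icc (-1 : ℝ) 1, ρ r = (∫ y in (-1 : ℝ)..1, P T r y * ρ y) +
    j / 2 * ∫ s in (0 : ℝ)..T, (P s r 1 * A - P s r (-1) * B)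

namespace IsStationaryAt

variable {j A B T : ℝ} {ρ : ℝ → ℝ}

lemma integral_neumannMode_mul_eq_exp_mul_add (h : IsStationaryAt j A B T ρ) (hT : 0 < T)
    (hρ : IntegrableOn ρ (Ioc (-1) 1)) (n : ℕ) :
    ∫ r in (-1 : ℝ)..1, neumannMode n r * ρ r =
      Real.exp (-(neumannFreq n ^ 2 / 2 * T)) * (∫ r in (-1 : ℝ)..1, neumannMode n r * ρ r) +
      j / 2 * ((∫ s in (0 : ℝ)..T, Real.exp (-(neumannFreq n ^ 2 / 2 * s))) *
        (neumannMode n 1 * A - neumannMode n (-1) * B)) := by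
  have hinitial : IntegrableOn (fun r => ∫ y in Ioc (-1) 1, P T r y * ρ y) (Ioc (-1) 1) :=
    (integrable_P_mul measurable_const measurable_id (.of_forall fun _ => hT) hρ).integral_prod_left
  have hmode : ∫ r in Ioc (-1 : ℝ) 1, neumannMode n r * ∫ y in Ioc (-1) 1, P T r y * ρ y =
      ∫ y in Ioc (-1) 1, Real.exp (-(neumannFreq n ^ 2 / 2 * T)) * neumannMode n y * ρ y :=
    integral_neumannMode_mul_integral_P measurable_const measurable_id (.of_forall fun _ => hT) hρ n
  simp only [intervalIntegral.integral_of_le (show (-1 : ℝ) ≤ 1 by norm_num)]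
  calc ∫ r in Ioc (-1) 1, neumannMode n r * ρ r
    _ = ∫ r in Ioc (-1) 1, (neumannMode n r * (∫ y in Ioc (-1) 1, P T r y * ρ y) +
          j / 2 * (neumannMode n r * ∫ s in (0 : ℝ)..T, (P s r 1 * A - P s r (-1) * B))) := by
        refine setIntegral_congr_fun measurableSet_Ioc fun r hr => ?_
        rw [h r (Ioc_subset_Icc_self hr), intervalIntegral.integral_of_le (by norm_num), mul_add,
          mul_left_comm]
    _ = _ := by
        rw [integral_add (integrable_neumannMode_mul hinitial n) ((integrable_neumannMode_mul
            (integrableOn_integral_flux hT.le A B) n).const_mul _), integral_const_mul,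
          integral_neumannMode_mul_flux hT.le, hmode]
        simp_rw [mul_assoc]
        rw [integral_const_mul]

lemma sq_neumannFreq_mul_integral_neumannMode_mul (h : IsStationaryAt j A B T ρ) (hT : 0 < T)
    (hρ : IntegrableOn ρ (Ioc (-1) 1)) (n : ℕ) :
    neumannFreq n ^ 2 * ∫ r in (-1 : ℝ)..1, neumannMode n r * ρ r =
      j * (neumannMode n 1 * A - neumannMode n (-1) * B) := by
  have hE : 0 < ∫ s in (0 : ℝ)..T, Real.exp (-(neumannFreq n ^ 2 / 2 * s)) :=
    intervalIntegral.intervalIntegral_pos_of_pos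
      (Continuous.intervalIntegrable (by fun_prop) _ _) (fun _ => Real.exp_pos _) hT
  have hduhamel := h.integral_neumannMode_mul_eq_exp_mul_add hT hρ n
  have hdecay := mul_integral_exp_neg_mul (neumannFreq n ^ 2 / 2) T
  refine mul_left_cancel₀ hE.ne' ?_
  linear_combination 2 * hduhamel + 2 * (∫ r in (-1 : ℝ)..1, neumannMode n r * ρ r) * hdecay

lemma flux_eq (h : IsStationaryAt j A B T ρ) (hT : 0 < T) (hj : j ≠ 0)
    (hρ : IntegrableOn ρ (Ioc (-1) 1)) : A = B := by
  have h₀ := h.sq_neumannFreq_mul_integral_neumannMode_mul hT hρ 0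
  simpa [neumannFreq, neumannMode_zero, hj, sub_eq_zero, eq_comm] using h₀

end IsStationaryAt

section Completeness

variable {X : Type*} [TopologicalSpace X] [CompactSpace X] [MeasurableSpace X] [BorelSpace X]
  {μ : Measure X} [IsFiniteMeasure μ]

lemma ae_eq_zero_of_forall_integral_mul_eq_zero {A : Subalgebra ℝ C(X, ℝ)}
    (hA : A.SeparatesPoints) {u : C(X, ℝ)} (h : ∀ f ∈ A, ∫ x, f x * u x ∂μ = 0) :
    u =ᵐ[μ] 0 := by
  have hdense : Dense (A : Set C(X, ℝ)) := by
    rw [dense_iff_closure_eq, ← Subalgebra.topologicalClosure_coe,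
      ContinuousMap.subalgebra_topologicalClosure_eq_top_of_separatesPoints A hA,
      Algebra.coe_top]
  let toL2 := ContinuousMap.toLp 2 μ ℝ (E := ℝ)
  have horth : (fun f => inner ℝ (toL2 u) (toL2 f)) = 0 := by
    refine Continuous.ext_on hdense (by fun_prop) continuous_zero fun f hf => ?_
    simpa [toL2, ContinuousMap.inner_toLp] using h f hf
  have hzero : toL2 u = 0 := inner_self_eq_zero.mp (congrFun horth u)
  exact (ContinuousMap.coeFn_toLp μ u).symm.trans (hzero ▸ Lp.coeFn_zero ℝ 2 μ)

open Polynomial Polynomial.Chebyshev in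
lemma ae_eq_zero_of_forall_integral_chebyshevT_mul_eq_zero {φ : C(X, ℝ)}
    (hφ : Function.Injective φ) {u : C(X, ℝ)}
    (h : ∀ n : ℕ, ∫ x, (T ℝ n).eval (φ x) * u x ∂μ = 0) : u =ᵐ[μ] 0 := by
  let L : ℝ[X] →ₗ[ℝ] ℝ := (innerSL ℝ (ContinuousMap.toLp 2 μ ℝ u)).toLinearMap ∘ₗ
    (ContinuousMap.toLp 2 μ ℝ).toLinearMap ∘ₗ (aeval φ).toLinearMap
  have hL (p : ℝ[X]) : L p = ∫ x, p.eval (φ x) * u x ∂μ := by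
    simp [L, ContinuousMap.inner_toLp]
  have hspan : Submodule.span ℝ (range (chebyshevTsequence ℝ)) = ⊤ :=
    (chebyshevTsequence ℝ).span fun n => by simp [chebyshevTsequence]
  have hzero : L = 0 := LinearMap.ext_on_range hspan fun n => (hL _).trans (h n)
  refine ae_eq_zero_of_forall_integral_mul_eq_zero (A := Algebra.adjoin ℝ {φ}) (fun x y hxy =>
    ⟨φ, ⟨φ, Algebra.self_mem_adjoin_singleton ℝ φ, rfl⟩, hφ.ne hxy⟩) fun f hf => ?_
  rw [Algebra.adjoin_singleton_eq_range_aeval] at hf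
  obtain ⟨p, rfl⟩ := hf
  simpa [hzero] using (hL p).symm

end Completeness

lemma neumannMode_eq_eval_chebyshevT (n : ℕ) (r : ℝ) :
    neumannMode n r = (Polynomial.Chebyshev.T ℝ n).eval (neumannMode 1 r) := by
  unfold neumannMode neumannFreq
  rw [Polynomial.Chebyshev.T_real_cos]
  push_cast
  ring_nf

lemma injOn_neumannMode_one : InjOn (neumannMode 1) (Icc (-1) 1) := by
  refine Real.injOn_cos.comp (fun x _ y _ hxy => ?_) fun r hr => ?_
  · have h := mul_left_cancel₀ (neumannFreq_ne_zero one_ne_zero) hxy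
    linarith
  · have := Real.pi_pos
    simp only [neumannFreq, Nat.cast_one, mem_Icc] at hr ⊢
    constructor <;> nlinarith

lemma eqOn_zero_of_forall_integral_neumannMode_mul_eq_zero {u : ℝ → ℝ}
    (hu : ContinuousOn u (Icc (-1) 1))
    (h : ∀ n, ∫ r in (-1 : ℝ)..1, neumannMode n r * u r = 0) : EqOn u 0 (Icc (-1) 1) := by
  let μ : Measure (Icc (-1 : ℝ) 1) := volume.comap Subtype.val
  have : IsFiniteMeasureOnCompacts μ :=
    .comap' volume continuous_subtype_val (.subtype_coe measurableSet_Icc)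
  have hae : (Icc (-1) 1).domRestrict u =ᵐ[μ] 0 := by
    refine ae_eq_zero_of_forall_integral_chebyshevT_mul_eq_zero
      (φ := ⟨_, (continuous_neumannMode 1).continuousOn.domRestrict⟩) (u := ⟨_, hu.domRestrict⟩)
      injOn_neumannMode_one.injective fun n => ?_
    have hn := h n
    rw [intervalIntegral.integral_of_le (by norm_num), ← integral_Icc_eq_integral_Ioc,
      ← integral_subtype_comap measurableSet_Icc] at hn
    simp_rw [neumannMode_eq_eval_chebyshevT n] at hn
    exact hn
  refine Measure.eqOn_of_ae_eq ((ae_restrict_iff_subtype measurableSet_Icc).mpr hae) hu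
    continuousOn_const ?_
  rw [interior_Icc, closure_Ioo (by norm_num)]

lemma sin_neumannFreq_mul_two (n : ℕ) : Real.sin (neumannFreq n * (1 + 1)) = 0 := by
  rw [neumannFreq, one_add_one_eq_two, div_mul_cancel₀ _ two_ne_zero, Real.sin_nat_mul_pi]

lemma hasDerivAt_sin_neumannFreq_mul (n : ℕ) (r : ℝ) :
    HasDerivAt (fun r => Real.sin (neumannFreq n * (r + 1))) (neumannFreq n * neumannMode n r) r :=
  (((hasDerivAt_id' r).add_const 1).const_mul (neumannFreq n)).sin.congr_deriv
    (by simp [neumannMode, mul_comm])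

lemma hasDerivAt_neumannMode (n : ℕ) (r : ℝ) :
    HasDerivAt (neumannMode n) (-(neumannFreq n * Real.sin (neumannFreq n * (r + 1)))) r :=
  (((hasDerivAt_id' r).add_const 1).const_mul (neumannFreq n)).cos.congr_deriv
    (by simp [mul_comm])

lemma integral_neumannMode_eq_zero {n : ℕ} (hn : n ≠ 0) :
    ∫ r in (-1 : ℝ)..1, neumannMode n r = 0 := by
  refine (mul_eq_zero_iff_left (neumannFreq_ne_zero hn)).mp ?_
  rw [← intervalIntegral.integral_const_mul, intervalIntegral.integral_eq_sub_of_hasDerivAt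
    (fun r _ => hasDerivAt_sin_neumannFreq_mul n r)
    (Continuous.intervalIntegrable (by fun_prop) _ _), sin_neumannFreq_mul_two]
  simp

lemma sq_neumannFreq_mul_integral_neumannMode_mul_id (n : ℕ) :
    neumannFreq n ^ 2 * ∫ r in (-1 : ℝ)..1, neumannMode n r * r =
      neumannMode n 1 - neumannMode n (-1) := by
  have hderiv (r : ℝ) : HasDerivAt
      (fun r => neumannFreq n * (r * Real.sin (neumannFreq n * (r + 1))) + neumannMode n r)
      (neumannFreq n ^ 2 * (neumannMode n r * r)) r :=
    ((((hasDerivAt_id' r).mul (hasDerivAt_sin_neumannFreq_mul n r)).const_mul _).add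
      (hasDerivAt_neumannMode n r)).congr_deriv (by ring)
  rw [← intervalIntegral.integral_const_mul, intervalIntegral.integral_eq_sub_of_hasDerivAt
    (fun r _ => hderiv r) (Continuous.intervalIntegrable (by fun_prop) _ _),
    sin_neumannFreq_mul_two]
  simp

lemma integral_neumannMode_mul_sub {u v : ℝ → ℝ} (hu : ContinuousOn u (Icc (-1) 1))
    (hv : ContinuousOn v (Icc (-1) 1)) (n : ℕ) :
    ∫ r in (-1 : ℝ)..1, neumannMode n r * (u r - v r) =
      (∫ r in (-1 : ℝ)..1, neumannMode n r * u r) -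
        ∫ r in (-1 : ℝ)..1, neumannMode n r * v r := by
  have hint {f : ℝ → ℝ} (hf : ContinuousOn f (Icc (-1) 1)) :
      IntervalIntegrable (fun r => neumannMode n r * f r) volume (-1) 1 :=
    ((continuous_neumannMode n).continuousOn.mul hf).intervalIntegrable_of_Icc (by norm_num)
  simp_rw [mul_sub]
  exact intervalIntegral.integral_sub (hint hu) (hint hv)

lemma exists_eqOn_const_of_forall_integral_neumannMode_mul_eq_zero {u : ℝ → ℝ}
    (hu : ContinuousOn u (Icc (-1) 1))
    (h : ∀ n ≠ 0, ∫ r in (-1 : ℝ)..1, neumannMode n r * u r = 0) :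
    ∃ c, ∀ r ∈ Icc (-1 : ℝ) 1, u r = c := by
  set c := (∫ r in (-1 : ℝ)..1, u r) / 2 with hc
  suffices hmean : EqOn (fun r => u r - c) 0 (Icc (-1) 1) from
    ⟨c, fun r hr => sub_eq_zero.mp (hmean hr)⟩
  refine eqOn_zero_of_forall_integral_neumannMode_mul_eq_zero (hu.sub continuousOn_const)
    fun n => ?_
  rw [integral_neumannMode_mul_sub hu continuousOn_const, intervalIntegral.integral_mul_const]
  rcases eq_or_ne n 0 with rfl | hn
  · simp only [neumannMode_zero, one_mul, intervalIntegral.integral_const, smul_eq_mul, hc]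
    ring
  · rw [h n hn, integral_neumannMode_eq_zero hn, zero_mul, sub_zero]

lemma IsStationaryAt.exists_eq_affine {j A B T : ℝ} {ρ : ℝ → ℝ} (h : IsStationaryAt j A B T ρ)
    (hT : 0 < T) (hj : j ≠ 0) (hρ : ContinuousOn ρ (Icc (-1) 1)) :
    ∃ c, ∀ r ∈ Icc (-1 : ℝ) 1, ρ r = j * A * r + c := by
  have hint : IntegrableOn ρ (Ioc (-1) 1) := hρ.integrableOn_Icc.mono_set Ioc_subset_Icc_self
  have horth (n : ℕ) (hn : n ≠ 0) :
      ∫ r in (-1 : ℝ)..1, neumannMode n r * (ρ r - j * A * r) = 0 := by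
    refine (mul_eq_zero_iff_left (pow_ne_zero 2 (neumannFreq_ne_zero hn))).mp ?_
    rw [integral_neumannMode_mul_sub hρ (by fun_prop)]
    simp_rw [mul_left_comm (neumannMode n _)]
    rw [intervalIntegral.integral_const_mul]
    linear_combination h.sq_neumannFreq_mul_integral_neumannMode_mul hT hint n -
      j * A * sq_neumannFreq_mul_integral_neumannMode_mul_id n +
      j * neumannMode n (-1) * h.flux_eq hT hj hint
  obtain ⟨c, hc⟩ := exists_eqOn_const_of_forall_integral_neumannMode_mul_eq_zero
    (hρ.sub (by fun_prop)) horth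
  exact ⟨c, fun r hr => sub_eq_iff_eq_add'.mp (hc r hr)⟩

lemma strictMonoOn_add_mul_pow {j : ℝ} (hj : 0 ≤ j) (K : ℕ) :
    StrictMonoOn (fun x : ℝ => x + j * x ^ K) (Ici 0) :=
  fun _ hx _ _ hxy =>
    add_lt_add_of_lt_of_le hxy (mul_le_mul_of_nonneg_left (pow_le_pow_left₀ hx hxy.le K) hj)

theorem stationary_solution_unique_general {j T α : ℝ} {K : ℕ} {ρ : ℝ → ℝ} (hj : 0 < j)
    (hT : 0 < T) (hK : K ≠ 0) (hα : 0 ≤ α) (hαeq : α + j * α ^ K = j + 1 / 2)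
    (hc : ContinuousOn ρ (Icc (-1) 1)) (hright : 0 ≤ ρ 1) (hleft : ρ (-1) ≤ 1)
    (hsol : IsStationaryAt j (1 - ρ 1 ^ K) (1 - (1 - ρ (-1)) ^ K) T ρ) :
    ∀ r ∈ Icc (-1 : ℝ) 1, ρ r = j * (1 - α ^ K) * r + 1 / 2 := by
  have hflux := hsol.flux_eq hT hj.ne' (hc.integrableOn_Icc.mono_set Ioc_subset_Icc_self)
  have hsymm : ρ 1 = 1 - ρ (-1) :=
    (pow_left_inj₀ hright (sub_nonneg.mpr hleft) hK).mp (sub_right_injective hflux)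
  obtain ⟨c, haff⟩ := hsol.exists_eq_affine hT hj.ne' hc
  have hc₁ := haff 1 (right_mem_Icc.mpr (by norm_num))
  have hc₂ := haff (-1) (left_mem_Icc.mpr (by norm_num))
  obtain rfl : c = 1 / 2 := by linarith
  have hboundary : ρ 1 + j * ρ 1 ^ K = α + j * α ^ K := by linarith
  have hρα : ρ 1 = α := (strictMonoOn_add_mul_pow hj.le K).injOn hright hα hboundary
  rwa [hρα] at haff

/-- Uniqueness of the stationary solution: if `ρ̂ : [−1,1] → [0,1]` is continuous
and the time-independent function `(r,t) ↦ ρ̂(r)` solves the macroscopic integral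
equation with initial datum `ρ̂`, then `ρ̂(r) = j·(1−α^K)·r + 1/2`, where
`α ∈ (1/2,1)` is the unique solution of `α + j·α^K = j + 1/2`. -/
theorem stationary_solution_unique (j : ℝ) (hj : 0 < j) (K : ℕ) (hK : 1 ≤ K)
    (α : ℝ) (hα : α ∈ Set.Ioo (1 / 2 : ℝ) 1) (hαeq : α + j * α ^ K = j + 1 / 2)
    (ρhat : ℝ → ℝ) (hc : ContinuousOn ρhat (Set.Icc (-1 : ℝ) 1))
    (h01 : ∀ r ∈ Set.Icc (-1 : ℝ) 1, ρhat r ∈ Set.Icc (0 : ℝ) 1)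
    (hsol : IsMacroSolution j K ρhat (fun r _ => ρhat r)) :
    ∀ r ∈ Set.Icc (-1 : ℝ) 1, ρhat r = j * (1 - α ^ K) * r + 1 / 2 :=
  stationary_solution_unique_general hj one_pos (Nat.one_le_iff_ne_zero.mp hK)
    (one_half_pos.trans hα.1).le hαeq hc (h01 1 (by simp)).1 (h01 (-1) (by simp)).2
    (hsol.2.2.2 1 one_pos)
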